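/- arXiv:2511.03708 — 4 statements merged into one kernel-verified Lean document; each statement's English description precedes it below -/
import Mathlib

section
/- For every integer M ≥ 2, the function ψ_M attains its infimum over U_M, the optimal value is strictly positive (ψ*_M > 0), and every minimizer u* of ψ_M over U_M lies in the interior of U_M, i.e. 0 < u*_1 < u*_2 < ⋯ < u*_{M−1} < 1. -/
noncomputable def gammaMin (d : ℕ) (β : ℝ) : ℝ := β / (2 * β + d)

noncomputable def gammaMax (d : ℕ) (β : ℝ) : ℝ := (β + d) / (2 * β + d)

noncomputable def Sset (d : ℕ) (β : ℝ) : Set ℝ := Set.Icc (gammaMin d β) (gammaMax d β)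

noncomputable def hFun (M : ℕ) (γ : ℝ) : ℝ := (1 - γ) / (1 - γ ^ M)

/-- η_1(u,γ) = u_1, η_i(u,γ) = u_i − γ·u_{i−1} for 2 ≤ i ≤ M−1, η_M(u,γ) = 1 − γ·u_{M−1}. -/
noncomputable def etaFun (M : ℕ) (u : ℕ → ℝ) (γ : ℝ) (i : ℕ) : ℝ :=
  if i = 1 then u 1 else if i = M then 1 - γ * u (M - 1) else u i - γ * u (i - 1)

/-- Ψ_M(u,γ) = max_{1≤i≤M} η_i(u,γ) − h_M(γ). -/
noncomputable def PsiFun (M : ℕ) (u : ℕ → ℝ) (γ : ℝ) : ℝ :=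
  (⨆ i : Set.Icc 1 M, etaFun M u γ i.1) - hFun M γ

/-- ψ_M(u) = max( u_1, sup_{γ∈𝒮} Ψ_M(u,γ) ). -/
noncomputable def psiFun (d : ℕ) (β : ℝ) (M : ℕ) (u : ℕ → ℝ) : ℝ :=
  max (u 1) (⨆ γ : Sset d β, PsiFun M u γ.1)

/-- U_M = { u : 0 ≤ u_1 ≤ u_2 ≤ ⋯ ≤ u_{M−1} ≤ 1 } (only coordinates 1,…,M−1 matter). -/
def UM (M : ℕ) : Set (ℕ → ℝ) :=
  {u | 0 ≤ u 1 ∧ u (M - 1) ≤ 1 ∧ ∀ i, 1 ≤ i → i + 1 ≤ M - 1 → u i ≤ u (i + 1)}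

/-- ψ*_M = inf_{u ∈ U_M} ψ_M(u). -/
noncomputable def psiStar (d : ℕ) (β : ℝ) (M : ℕ) : ℝ :=
  sInf (psiFun d β M '' UM M)

/-!
Read `u 0 = 0` and `u M = 1`, so that `η_{i+1}(u, γ) = u (i + 1) - γ * u i`. Then `ψ_M u ≤ v` says
that `u 1 ≤ v` and `u (i + 1) ≤ F (u i) + v` for `1 ≤ i < M`, where `F x = inf_γ (γ * x + h_M γ)` is
continuous, strictly increasing and positive at `0`. Hence `u` lies below the sequence `g v` which
satisfies all these inequalities with equality, and `1 ≤ g v M`. Since `g v M` is continuous and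
strictly increasing in `v`, and `g 0 M < 1`, the least such `v` is the positive solution of
`g v M = 1`. For this `v` any slack in one inequality would propagate to the index `M`, so the
minimizer is `g v`, which is strictly increasing.
-/

section BalancedSeq

/-- The sequence `0, v, F v + v, F (F v + v) + v, …` which solves `g (i + 1) = F (g i) + v` from
index `1` on; the value `0` at index `0` is the convention `u 0 = 0`, not part of the recursion. -/
def balancedSeq (F : ℝ → ℝ) (v : ℝ) : ℕ → ℝ
  | 0 => 0
  | 1 => v
  | n + 2 => F (balancedSeq F v (n + 1)) + v

/-- Subsolutions, at the indices `1, …, M`, of the recursion solved by `balancedSeq F v`. -/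
structure IsSubsolution (F : ℝ → ℝ) (v : ℝ) (M : ℕ) (w : ℕ → ℝ) : Prop where
  one_le : w 1 ≤ v
  succ_le : ∀ i ∈ Set.Ico 1 M, w (i + 1) ≤ F (w i) + v

variable {F : ℝ → ℝ} {v : ℝ} {M n : ℕ} {w : ℕ → ℝ}

lemma balancedSeq_succ (hn : 1 ≤ n) : balancedSeq F v (n + 1) = F (balancedSeq F v n) + v := by
  obtain ⟨k, rfl⟩ := Nat.exists_eq_add_of_le' hn
  rfl

lemma isSubsolution_balancedSeq : IsSubsolution F v M (balancedSeq F v) where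
  one_le := le_rfl
  succ_le _ hi := (balancedSeq_succ hi.1).le

lemma continuous_balancedSeq (hF : Continuous F) (hn : 1 ≤ n) :
    Continuous fun v ↦ balancedSeq F v n := by
  induction n, hn using Nat.le_induction with
  | base => exact continuous_id
  | succ n hn ih =>
    simp only [balancedSeq_succ hn]
    fun_prop

lemma strictMono_balancedSeq_param (hF : Monotone F) (hn : 1 ≤ n) :
    StrictMono fun v ↦ balancedSeq F v n := by
  induction n, hn using Nat.le_induction with
  | base => exact strictMono_id
  | succ n hn ih =>
    simp only [balancedSeq_succ hn]
    exact (hF.comp ih.monotone).add_strictMono strictMono_id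

lemma strictMono_balancedSeq (hF : StrictMono F) (hF0 : 0 < F 0) (hv : 0 < v) :
    StrictMono (balancedSeq F v) := by
  refine strictMono_nat_of_lt_succ fun n ↦ ?_
  induction n with
  | zero => exact hv
  | succ n ih =>
    rw [balancedSeq_succ n.succ_pos]
    rcases n.eq_zero_or_pos with rfl | hn
    · exact lt_add_of_pos_left v (hF0.trans (hF hv))
    · rw [balancedSeq_succ hn]
      gcongr
      simpa only [balancedSeq_succ hn] using hF ih

lemma exists_balancedSeq_eq_one (hFc : Continuous F) (hF : StrictMono F) (hF0 : 0 < F 0)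
    (hM : 1 ≤ M) (h : balancedSeq F 0 M < 1) : ∃ v > 0, balancedSeq F v M = 1 := by
  have h_one : 1 ≤ balancedSeq F 1 M :=
    (strictMono_balancedSeq hF hF0 one_pos).monotone hM
  obtain ⟨v, hv, hv_eq⟩ := intermediate_value_Ioc zero_le_one
    (continuous_balancedSeq hFc hM).continuousOn ⟨h, h_one⟩
  exact ⟨v, hv.1, hv_eq⟩

lemma IsSubsolution.le_balancedSeq (hw : IsSubsolution F v M w) (hF : Monotone F) (hn : 1 ≤ n)
    (hnM : n ≤ M) : w n ≤ balancedSeq F v n := by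
  induction n, hn using Nat.le_induction with
  | base => exact hw.one_le
  | succ n hn ih =>
    calc w (n + 1) ≤ F (w n) + v := hw.succ_le n ⟨hn, hnM⟩
      _ ≤ F (balancedSeq F v n) + v := by gcongr; exact hF (ih (by lia))
      _ = balancedSeq F v (n + 1) := (balancedSeq_succ hn).symm

lemma IsSubsolution.lt_balancedSeq (hw : IsSubsolution F v M w) (hF : StrictMono F) {m : ℕ}
    (hm : 1 ≤ m) (h : w m < balancedSeq F v m) (hmn : m ≤ n) (hnM : n ≤ M) :
    w n < balancedSeq F v n := by
  induction n, hmn using Nat.le_induction with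
  | base => exact h
  | succ n hmn ih =>
    have hn : 1 ≤ n := hm.trans hmn
    calc w (n + 1) ≤ F (w n) + v := hw.succ_le n ⟨hn, hnM⟩
      _ < F (balancedSeq F v n) + v := by gcongr; exact hF (ih (by lia))
      _ = balancedSeq F v (n + 1) := (balancedSeq_succ hn).symm

lemma IsSubsolution.eqOn_balancedSeq (hw : IsSubsolution F v M w) (hF : StrictMono F)
    (h : w M = balancedSeq F v M) : Set.EqOn w (balancedSeq F v) (Set.Icc 1 M) := fun _ hi ↦
  (hw.le_balancedSeq hF.monotone hi.1 hi.2).eq_of_not_lt fun hlt ↦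
    (hw.lt_balancedSeq hF hi.1 hlt hi.2 le_rfl).ne h

end BalancedSeq

section AffineEnvelope

/-- The lower envelope of the affine functions `x ↦ γ * x + h γ` with slopes `γ ∈ S`. -/
noncomputable def affineEnvelope (S : Set ℝ) (h : ℝ → ℝ) (x : ℝ) : ℝ :=
  ⨅ γ : S, (γ * x + h γ)

variable {S : Set ℝ} {h : ℝ → ℝ} {a b c x γ : ℝ}

lemma bddBelow_range_affine (hS : S ⊆ Set.Icc a b) (hh : BddBelow (h '' S)) (x : ℝ) :
    BddBelow (Set.range fun γ : S ↦ (γ * x + h γ : ℝ)) := by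
  have h_mul : BddBelow ((· * x) '' S) :=
    (isCompact_Icc.image (continuous_mul_const x)).bddBelow.mono (Set.image_mono hS)
  refine (h_mul.add hh).mono (Set.range_subset_iff.2 fun γ ↦ ?_)
  exact Set.add_mem_add (Set.mem_image_of_mem _ γ.2) (Set.mem_image_of_mem h γ.2)

lemma le_affineEnvelope_iff (hne : S.Nonempty) (hS : S ⊆ Set.Icc a b) (hh : BddBelow (h '' S)) :
    c ≤ affineEnvelope S h x ↔ ∀ γ ∈ S, c ≤ γ * x + h γ := by
  have := hne.to_subtype
  rw [affineEnvelope, le_ciInf_iff (bddBelow_range_affine hS hh x), Subtype.forall]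

lemma affineEnvelope_le (hS : S ⊆ Set.Icc a b) (hh : BddBelow (h '' S)) (hγ : γ ∈ S) (x : ℝ) :
    affineEnvelope S h x ≤ γ * x + h γ :=
  ciInf_le (bddBelow_range_affine hS hh x) ⟨γ, hγ⟩

lemma strictMono_affineEnvelope (hne : S.Nonempty) (hS : S ⊆ Set.Icc a b)
    (hh : BddBelow (h '' S)) (ha : 0 < a) : StrictMono (affineEnvelope S h) := by
  intro x y hxy
  refine (lt_add_of_pos_right _ (mul_pos ha (sub_pos.2 hxy))).trans_le
    ((le_affineEnvelope_iff hne hS hh).2 fun γ hγ ↦ ?_)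
  calc affineEnvelope S h x + a * (y - x) ≤ γ * x + h γ + γ * (y - x) :=
        add_le_add (affineEnvelope_le hS hh hγ x)
          (mul_le_mul_of_nonneg_right (hS hγ).1 (sub_nonneg.2 hxy.le))
    _ = γ * y + h γ := by ring

lemma continuous_affineEnvelope (hne : S.Nonempty) (hS : S ⊆ Set.Icc a b)
    (hh : BddBelow (h '' S)) : Continuous (affineEnvelope S h) := by
  refine (LipschitzWith.of_le_add_mul' (max |a| |b|) fun x y ↦ ?_).continuous
  refine sub_le_iff_le_add.1 ((le_affineEnvelope_iff hne hS hh).2 fun γ hγ ↦ ?_)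
  have h_slope : γ * (x - y) ≤ max |a| |b| * dist x y :=
    calc γ * (x - y) ≤ |γ| * |x - y| := (le_abs_self _).trans_eq (abs_mul _ _)
      _ ≤ max |a| |b| * dist x y := by
        rw [Real.dist_eq]
        gcongr
        exact abs_le_max_abs_abs (hS hγ).1 (hS hγ).2
  linarith [affineEnvelope_le hS hh hγ x]

end AffineEnvelope

section HFun

variable {S : Set ℝ} {M : ℕ} {a γ : ℝ}

lemma hFun_nonneg (hγ : γ ∈ Set.Ico 0 1) : 0 ≤ hFun M γ :=
  div_nonneg (sub_nonneg.2 hγ.2.le) (sub_nonneg.2 (pow_le_one₀ hγ.1 hγ.2.le))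

lemma one_div_le_hFun (hM : 1 ≤ M) (hγ : γ ∈ Set.Ico 0 1) : 1 / (M : ℝ) ≤ hFun M γ := by
  have h_pow : γ ^ M < 1 := pow_lt_one₀ hγ.1 hγ.2 (by lia)
  have h_bernoulli : 1 + M * (γ - 1) ≤ γ ^ M := one_add_mul_sub_le_pow (by linarith [hγ.1]) M
  rw [hFun, div_le_div_iff₀ (Nat.cast_pos.2 hM) (sub_pos.2 h_pow)]
  linarith

lemma bddBelow_image_hFun (hM : 1 ≤ M) (hS : S ⊆ Set.Ico 0 1) : BddBelow (hFun M '' S) :=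
  ⟨1 / M, Set.forall_mem_image.2 fun _ hγ ↦ one_div_le_hFun hM (hS hγ)⟩

lemma balancedSeq_zero_lt_one {F : ℝ → ℝ} (hM : 1 ≤ M) (hγ : γ ∈ Set.Ioo 0 1)
    (hF : ∀ x, F x ≤ γ * x + hFun M γ) : balancedSeq F 0 M < 1 := by
  have h_den : 0 < 1 - γ ^ M := sub_pos.2 (pow_lt_one₀ hγ.1.le hγ.2 (by lia))
  have h_geom (n : ℕ) : balancedSeq F 0 (n + 1) ≤ (1 - γ ^ n) / (1 - γ ^ M) := by
    induction n with
    | zero => simp [balancedSeq]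
    | succ n ih =>
      calc balancedSeq F 0 (n + 2) ≤ γ * balancedSeq F 0 (n + 1) + hFun M γ := by
            simpa only [balancedSeq, add_zero] using hF _
        _ ≤ γ * ((1 - γ ^ n) / (1 - γ ^ M)) + (1 - γ) / (1 - γ ^ M) :=
            add_le_add_left (mul_le_mul_of_nonneg_left ih hγ.1.le) _
        _ = (1 - γ ^ (n + 1)) / (1 - γ ^ M) := by ring
  obtain ⟨m, rfl⟩ := Nat.exists_eq_add_of_le' hM
  refine (h_geom m).trans_lt ((div_lt_one h_den).2 ?_)
  exact sub_lt_sub_left (pow_lt_pow_right_of_lt_one₀ hγ.1 hγ.2 m.lt_succ_self) 1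

lemma affineEnvelope_hFun_zero_pos (hM : 1 ≤ M) (hne : S.Nonempty) (hS : S ⊆ Set.Ico 0 1) :
    0 < affineEnvelope S (hFun M) 0 := by
  refine (one_div_pos.2 (Nat.cast_pos.2 hM)).trans_le ((le_affineEnvelope_iff hne
    (hS.trans Set.Ico_subset_Icc_self) (bddBelow_image_hFun hM hS)).2 fun γ hγ ↦ ?_)
  simpa only [mul_zero, zero_add] using one_div_le_hFun hM (hS hγ)

lemma strictMono_affineEnvelope_hFun (hM : 1 ≤ M) (hne : S.Nonempty) (ha : 0 < a)
    (hS : S ⊆ Set.Ico a 1) : StrictMono (affineEnvelope S (hFun M)) :=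
  strictMono_affineEnvelope hne (hS.trans Set.Ico_subset_Icc_self)
    (bddBelow_image_hFun hM (hS.trans (Set.Ico_subset_Ico_left ha.le))) ha

lemma exists_balancedSeq_affineEnvelope_eq_one (hM : 1 ≤ M) (hne : S.Nonempty) (ha : 0 < a)
    (hS : S ⊆ Set.Ico a 1) : ∃ v > 0, balancedSeq (affineEnvelope S (hFun M)) v M = 1 := by
  have hS_unit : S ⊆ Set.Ico 0 1 := hS.trans (Set.Ico_subset_Ico_left ha.le)
  have hS_Icc : S ⊆ Set.Icc a 1 := hS.trans Set.Ico_subset_Icc_self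
  have hh : BddBelow (hFun M '' S) := bddBelow_image_hFun hM hS_unit
  have h_lt_one : balancedSeq (affineEnvelope S (hFun M)) 0 M < 1 := by
    obtain ⟨γ, hγ⟩ := hne
    exact balancedSeq_zero_lt_one hM ⟨ha.trans_le (hS hγ).1, (hS hγ).2⟩
      (affineEnvelope_le hS_Icc hh hγ)
  exact exists_balancedSeq_eq_one (continuous_affineEnvelope hne hS_Icc hh)
    (strictMono_affineEnvelope_hFun hM hne ha hS) (affineEnvelope_hFun_zero_pos hM hne hS_unit)
    hM h_lt_one

end HFun

section Psi

/-- The objective `ψ_M` with an arbitrary set `S` of values of `γ` in place of `𝒮`. -/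
noncomputable def psiOver (S : Set ℝ) (M : ℕ) (u : ℕ → ℝ) : ℝ :=
  max (u 1) (⨆ γ : S, PsiFun M u γ)

variable {S : Set ℝ} {M : ℕ} {u : ℕ → ℝ} {a v γ : ℝ}

lemma etaFun_succ {i : ℕ} (hi : i ∈ Set.Ico 1 M) :
    etaFun M u γ (i + 1) = Function.update u M 1 (i + 1) - γ * Function.update u M 1 i := by
  have hi_pos : i ≠ 0 := Nat.one_le_iff_ne_zero.1 hi.1
  have hi_ne : i ≠ M := hi.2.ne
  rcases eq_or_ne (i + 1) M with rfl | hiM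
  · simp [etaFun, hi_pos]
  · simp [etaFun, hi_pos, hi_ne, hiM]

lemma forall_etaFun_le_iff {c : ℝ} (hM : 1 ≤ M) :
    (∀ i ∈ Set.Icc 1 M, etaFun M u γ i ≤ c) ↔ u 1 ≤ c ∧ ∀ i ∈ Set.Ico 1 M,
      Function.update u M 1 (i + 1) - γ * Function.update u M 1 i ≤ c := by
  refine ⟨fun h ↦ ⟨h 1 ⟨le_rfl, hM⟩, fun i hi ↦ ?_⟩, fun ⟨h_one, h_succ⟩ i hi ↦ ?_⟩
  · rw [← etaFun_succ hi]
    exact h (i + 1) ⟨by lia, hi.2⟩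
  · obtain ⟨j, rfl⟩ := Nat.exists_eq_add_of_le' hi.1
    rcases j.eq_zero_or_pos with rfl | hj
    · exact h_one
    · have hjM : j ∈ Set.Ico 1 M := ⟨hj, hi.2⟩
      exact (etaFun_succ hjM).trans_le (h_succ j hjM)

lemma PsiFun_le_iff (hM : 1 ≤ M) :
    PsiFun M u γ ≤ v ↔ u 1 ≤ v + hFun M γ ∧ ∀ i ∈ Set.Ico 1 M,
      Function.update u M 1 (i + 1) - γ * Function.update u M 1 i ≤ v + hFun M γ := by
  have : Nonempty (Set.Icc 1 M) := ⟨⟨1, le_rfl, hM⟩⟩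
  rw [PsiFun, sub_le_iff_le_add, ciSup_le_iff (Set.finite_range _).bddAbove, Subtype.forall,
    forall_etaFun_le_iff hM]

lemma bddAbove_range_PsiFun (hS : S ⊆ Set.Ico 0 1) (hM : 1 ≤ M) (u : ℕ → ℝ) :
    BddAbove (Set.range fun γ : S ↦ PsiFun M u γ) := by
  set w := Function.update u M 1
  obtain ⟨C, hC⟩ := ((Set.finite_Ico 1 M).image fun i ↦ w (i + 1) + |w i|).bddAbove
  refine ⟨max (u 1) C, Set.forall_mem_range.2 fun ⟨γ, hγ⟩ ↦ (PsiFun_le_iff hM).2 ?_⟩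
  have h_nonneg : 0 ≤ hFun M γ := hFun_nonneg (hS hγ)
  refine ⟨(le_max_left _ _).trans (le_add_of_nonneg_right h_nonneg), fun i hi ↦ ?_⟩
  have h_mul : -(γ * w i) ≤ |w i| :=
    calc -(γ * w i) ≤ |γ * w i| := neg_le_abs _
      _ = γ * |w i| := by rw [abs_mul, abs_of_nonneg (hS hγ).1]
      _ ≤ |w i| := mul_le_of_le_one_left (abs_nonneg _) (hS hγ).2.le
  have h_bound : w (i + 1) + |w i| ≤ C := hC (Set.mem_image_of_mem _ hi)
  linarith [le_max_right (u 1) C]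

lemma psiOver_le_iff (hne : S.Nonempty) (hS : S ⊆ Set.Ico 0 1) (hM : 2 ≤ M) :
    psiOver S M u ≤ v ↔
      IsSubsolution (affineEnvelope S (hFun M)) v M (Function.update u M 1) := by
  have hM_one : 1 ≤ M := one_le_two.trans hM
  have h_one : Function.update u M 1 1 = u 1 := Function.update_of_ne (by lia) _ _
  have h_env {c x : ℝ} : c ≤ affineEnvelope S (hFun M) x ↔ ∀ γ ∈ S, c ≤ γ * x + hFun M γ :=
    le_affineEnvelope_iff hne (hS.trans Set.Ico_subset_Icc_self)
      (bddBelow_image_hFun hM_one hS)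
  have := hne.to_subtype
  rw [psiOver, max_le_iff, ciSup_le_iff (bddAbove_range_PsiFun hS hM_one u), Subtype.forall]
  constructor
  · rintro ⟨hu, hPsi⟩
    refine ⟨h_one.trans_le hu, fun i hi ↦ sub_le_iff_le_add.1 (h_env.2 fun γ hγ ↦ ?_)⟩
    linarith [((PsiFun_le_iff hM_one).1 (hPsi γ hγ)).2 i hi]
  · rintro ⟨hw, hsucc⟩
    have hu : u 1 ≤ v := h_one.symm.trans_le hw
    refine ⟨hu, fun γ hγ ↦ (PsiFun_le_iff hM_one).2 ⟨?_, fun i hi ↦ ?_⟩⟩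
    · exact hu.trans (le_add_of_nonneg_right (hFun_nonneg (hS hγ)))
    · linarith [h_env.1 (sub_le_iff_le_add.2 (hsucc i hi)) γ hγ]

lemma mem_UM_of_monotone (hu : Monotone u) (h_zero : 0 ≤ u 0) (h_M : u M ≤ 1) : u ∈ UM M :=
  ⟨h_zero.trans (hu zero_le_one), (hu (M.sub_le 1)).trans h_M, fun i _ _ ↦ hu i.le_succ⟩

theorem exists_strictMono_minimizer (hne : S.Nonempty) (ha : 0 < a) (hS : S ⊆ Set.Ico a 1)
    (hM : 2 ≤ M) : ∃ g : ℕ → ℝ, StrictMono g ∧ g 0 = 0 ∧ g M = 1 ∧ 0 < psiOver S M g ∧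
      (∀ u, psiOver S M g ≤ psiOver S M u) ∧
      ∀ u, psiOver S M u ≤ psiOver S M g → Set.EqOn u g (Set.Ico 1 M) := by
  have hM_one : 1 ≤ M := one_le_two.trans hM
  have hS_unit : S ⊆ Set.Ico 0 1 := hS.trans (Set.Ico_subset_Ico_left ha.le)
  set F := affineEnvelope S (hFun M)
  have hF : StrictMono F := strictMono_affineEnvelope_hFun hM_one hne ha hS
  have hF_zero : 0 < F 0 := affineEnvelope_hFun_zero_pos hM_one hne hS_unit
  obtain ⟨v, hv, hvM⟩ : ∃ v > 0, balancedSeq F v M = 1 :=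
    exists_balancedSeq_affineEnvelope_eq_one hM_one hne ha hS
  have h_iff {u : ℕ → ℝ} {c : ℝ} :
      psiOver S M u ≤ c ↔ IsSubsolution F c M (Function.update u M 1) :=
    psiOver_le_iff hne hS_unit hM
  have h_lower (u : ℕ → ℝ) : v ≤ psiOver S M u := by
    refine (strictMono_balancedSeq_param hF.monotone hM_one).le_iff_le.1 ?_
    calc balancedSeq F v M = Function.update u M 1 M := by rw [hvM, Function.update_self]
      _ ≤ balancedSeq F (psiOver S M u) M :=
        (h_iff.1 le_rfl).le_balancedSeq hF.monotone hM_one le_rfl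
  have h_upper : psiOver S M (balancedSeq F v) ≤ v := by
    rw [h_iff, ← hvM, Function.update_eq_self]
    exact isSubsolution_balancedSeq
  have h_psi : psiOver S M (balancedSeq F v) = v := h_upper.antisymm (h_lower _)
  refine ⟨balancedSeq F v, strictMono_balancedSeq hF hF_zero hv, rfl, hvM, ?_⟩
  rw [h_psi]
  refine ⟨hv, h_lower, fun u hu i hi ↦ ?_⟩
  have h_eqOn := (h_iff.1 hu).eqOn_balancedSeq hF
    ((Function.update_self ..).trans hvM.symm)
  simpa only [Function.update_of_ne hi.2.ne] using h_eqOn (Set.Ico_subset_Icc_self hi)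

theorem stmt1_general (hne : S.Nonempty) (ha : 0 < a) (hS : S ⊆ Set.Ico a 1) (hM : 2 ≤ M) :
    (∃ u ∈ UM M, psiOver S M u = sInf (psiOver S M '' UM M)) ∧
    0 < sInf (psiOver S M '' UM M) ∧
    (∀ u ∈ UM M, psiOver S M u = sInf (psiOver S M '' UM M) →
      0 < u 1 ∧ u (M - 1) < 1 ∧ ∀ i, 1 ≤ i → i + 1 ≤ M - 1 → u i < u (i + 1)) := by
  obtain ⟨g, hg, hg_zero, hg_M, h_pos, h_min, h_unique⟩ :=
    exists_strictMono_minimizer hne ha hS hM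
  have hgU : g ∈ UM M := mem_UM_of_monotone hg.monotone hg_zero.ge hg_M.le
  have h_sInf : sInf (psiOver S M '' UM M) = psiOver S M g :=
    IsLeast.csInf_eq ⟨Set.mem_image_of_mem _ hgU, Set.forall_mem_image.2 fun u _ ↦ h_min u⟩
  rw [h_sInf]
  refine ⟨⟨g, hgU, rfl⟩, h_pos, fun u _ hu ↦ ?_⟩
  have hug : Set.EqOn u g (Set.Ico 1 M) := h_unique u hu.le
  refine ⟨?_, ?_, fun i hi hiM ↦ ?_⟩
  · rw [hug ⟨le_rfl, hM⟩, ← hg_zero]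
    exact hg one_pos
  · rw [hug ⟨by lia, by lia⟩, ← hg_M]
    exact hg (by lia)
  · rw [hug ⟨hi, by lia⟩, hug ⟨by lia, by lia⟩]
    exact hg i.lt_succ_self

end Psi

section Sset

variable {d : ℕ} {β : ℝ}

lemma gammaMin_pos (hβ : 0 < β) : 0 < gammaMin d β := by
  unfold gammaMin
  positivity

lemma gammaMax_lt_one (hβ : 0 < β) : gammaMax d β < 1 := by
  rw [gammaMax, div_lt_one (by positivity)]
  linarith

lemma Sset_nonempty (hβ : 0 < β) : (Sset d β).Nonempty := by
  refine Set.nonempty_Icc.2 ?_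
  unfold gammaMin gammaMax
  gcongr
  exact le_add_of_nonneg_right d.cast_nonneg

lemma Sset_subset_Ico (hβ : 0 < β) : Sset d β ⊆ Set.Ico (gammaMin d β) 1 :=
  Set.Icc_subset_Ico_right (gammaMax_lt_one hβ)

end Sset

theorem stmt1 (d : ℕ) (hd : 1 ≤ d) (β : ℝ) (hβ : 0 < β) (M : ℕ) (hM2 : 2 ≤ M) :
    (∃ u ∈ UM M, psiFun d β M u = psiStar d β M) ∧
    0 < psiStar d β M ∧
    (∀ u ∈ UM M, psiFun d β M u = psiStar d β M →
      0 < u 1 ∧ u (M - 1) < 1 ∧ ∀ i, 1 ≤ i → i + 1 ≤ M - 1 → u i < u (i + 1)) :=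
  stmt1_general (Sset_nonempty hβ) (gammaMin_pos hβ) (Sset_subset_Ico hβ) hM2
end

section
/- For every integer M with 2 ≤ M ≤ 4, the optimal exponent is strictly decreasing in the batch budget: ψ*_{M+1} < ψ*_M. -/
/-!
A vector `u` feasible for `M` batches at level `p` becomes feasible for `M + 1` batches at level
`(1 - θ) * p` by interpolating between neighbouring entries. If the interpolation weight drops by
`c i` between positions `i` and `i + 1`, each constraint gains
`c i * (γ ^ i * p + γ ^ (i - 1) * h_M(γ))`, while passing from `h_M` to `h_{M+1}` costs
`h_M(γ) * γ ^ M * h_{M+1}(γ)`. The gain covers the cost, with a margin proportional to `p`, as soon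
as `c i ≥ γ ^ (M + 1 - i) * h_{M+1}(γ)`. Pairing the terms `γ ^ j` and `γ ^ (n - 1 - j)` of a
geometric sum by AM-GM shows that `c i = 1 / (min (2 * (M + 1 - i)) M + 1)` is admissible. The total
weight `∑ c i` must stay below `1`: it is `2/3`, `5/6`, `14/15` for `M = 2, 3, 4` and exceeds `1`
for `M = 5`. Since `ψ*_M > 0`, the factor `1 - θ` is a strict decrease.
-/

/-- The conditions `ψ_M(w) ≤ p` and `w ∈ U_M` with the supremum over `γ ∈ S` and the maximum over
`i` unfolded into inequalities. The conventions `w 0 = 0` and `w M = 1` give `η_1`, …, `η_M` the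
common form `w (i + 1) - γ * w i`. -/
structure IsFeasible (S : Set ℝ) (M : ℕ) (p : ℝ) (w : ℕ → ℝ) : Prop where
  zero : w 0 = 0
  last : w M = 1
  le_succ : ∀ i < M, w i ≤ w (i + 1)
  one_le : w 1 ≤ p
  succ_le : ∀ γ ∈ S, ∀ i < M, w (i + 1) ≤ γ * w i + p + hFun M γ

/-- The vector `u = (u_1, …, u_{M-1})` extended by `u_0 = 0` and `u_M = 1`, as `IsFeasible`
expects. -/
def bordered (M : ℕ) (u : ℕ → ℝ) (i : ℕ) : ℝ :=
  if i = 0 then 0 else if i = M then 1 else u i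

/-- The sequence for `M + 1` steps obtained from `w` by interpolating between neighbours; the
weight of `w i` at position `i` is the tail sum `∑_{i ≤ j ≤ M} c j`, so that the weight lost
between positions `i` and `i + 1` is `c i`. -/
def interpolate (M : ℕ) (c w : ℕ → ℝ) (i : ℕ) : ℝ :=
  (∑ j ∈ Finset.Ico i (M + 1), c j) * w i + (1 - ∑ j ∈ Finset.Ico i (M + 1), c j) * w (i - 1)

section StepFunction

variable {M : ℕ} {γ : ℝ}

lemma hFun_eq_inv_geom_sum (hγ : γ ≠ 1) : hFun M γ = (∑ j ∈ Finset.range M, γ ^ j)⁻¹ := by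
  rw [geom_sum_eq hγ, inv_div, hFun, ← neg_div_neg_eq, neg_sub, neg_sub]

lemma hFun_pos (hM : M ≠ 0) (hγ : γ ∈ Set.Ioo 0 1) : 0 < hFun M γ :=
  div_pos (sub_pos.2 hγ.2) (sub_pos.2 (pow_lt_one₀ hγ.1.le hγ.2 hM))

lemma hFun_mul_one_sub_pow (hM : M ≠ 0) (hγ : γ ∈ Set.Ioo 0 1) :
    hFun M γ * (1 - γ ^ M) = 1 - γ :=
  div_mul_cancel₀ _ (sub_pos.2 (pow_lt_one₀ hγ.1.le hγ.2 hM)).ne'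

lemma one_sub_le_hFun (hM : M ≠ 0) (hγ : γ ∈ Set.Ioo 0 1) : 1 - γ ≤ hFun M γ := by
  rw [← hFun_mul_one_sub_pow hM hγ]
  exact mul_le_of_le_one_right (hFun_pos hM hγ).le (sub_le_self _ (pow_nonneg hγ.1.le M))

lemma hFun_sub_hFun_succ (hM : M ≠ 0) (hγ : γ ∈ Set.Ioo 0 1) :
    hFun M γ - hFun (M + 1) γ = hFun M γ * (γ ^ M * hFun (M + 1) γ) := by
  have hsum : ∀ {n : ℕ}, n ≠ 0 → ∑ j ∈ Finset.range n, γ ^ j ≠ 0 := fun hn =>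
    (geom_sum_pos hγ.1.le hn).ne'
  have hsucc := hsum M.succ_ne_zero
  have hM' := hsum hM
  rw [hFun_eq_inv_geom_sum hγ.2.ne, hFun_eq_inv_geom_sum hγ.2.ne]
  rw [Finset.sum_range_succ] at hsucc ⊢
  field_simp
  ring

lemma two_mul_pow_le_pow_add_pow {i j k : ℕ} (h₀ : 0 ≤ γ) (h₁ : γ ≤ 1) (hk : i + j ≤ 2 * k) :
    2 * γ ^ k ≤ γ ^ i + γ ^ j := by
  refine le_of_sq_le_sq ?_ (by positivity)
  calc (2 * γ ^ k) ^ 2 = 4 * γ ^ (2 * k) := by ring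
    _ ≤ 4 * γ ^ (i + j) := by gcongr 4 * ?_; exact pow_le_pow_of_le_one h₀ h₁ hk
    _ ≤ (γ ^ i + γ ^ j) ^ 2 := by rw [pow_add]; nlinarith [sq_nonneg (γ ^ i - γ ^ j)]

lemma nat_mul_pow_le_geom_sum {n k : ℕ} (h₀ : 0 ≤ γ) (h₁ : γ ≤ 1) (hn : n ≤ 2 * k + 1) :
    n * γ ^ k ≤ ∑ j ∈ Finset.range n, γ ^ j := by
  have hpair : ∑ _j ∈ Finset.range n, 2 * γ ^ k ≤
      ∑ j ∈ Finset.range n, (γ ^ j + γ ^ (n - 1 - j)) := by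
    refine Finset.sum_le_sum fun j hj => two_mul_pow_le_pow_add_pow h₀ h₁ ?_
    have := Finset.mem_range.1 hj
    omega
  rw [Finset.sum_add_distrib, Finset.sum_range_reflect (γ ^ ·), Finset.sum_const,
    Finset.card_range, nsmul_eq_mul] at hpair
  linarith

lemma pow_mul_hFun_succ_le (k : ℕ) (hγ : γ ∈ Set.Ioo 0 1) :
    γ ^ k * hFun (M + 1) γ ≤ 1 / ((min (2 * k) M : ℕ) + 1) := by
  rw [hFun_eq_inv_geom_sum hγ.2.ne, ← div_eq_mul_inv,
    div_le_div_iff₀ (geom_sum_pos hγ.1.le M.succ_ne_zero) (by positivity), one_mul, mul_comm]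
  calc ((min (2 * k) M : ℕ) + 1 : ℝ) * γ ^ k
      ≤ ∑ j ∈ Finset.range (min (2 * k) M + 1), γ ^ j := by
        exact_mod_cast nat_mul_pow_le_geom_sum hγ.1.le hγ.2.le (by omega)
    _ ≤ ∑ j ∈ Finset.range (M + 1), γ ^ j :=
        Finset.sum_le_sum_of_subset_of_nonneg (Finset.range_mono (by omega))
          fun j _ _ => pow_nonneg hγ.1.le j

end StepFunction

namespace IsFeasible

variable {S : Set ℝ} {M : ℕ} {p γ : ℝ} {w : ℕ → ℝ}

/-- Iterating the constraints with one and the same `γ`. -/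
lemma one_sub_mul_succ_le (hw : IsFeasible S M p w) (hγS : γ ∈ S) (hγ : γ ∈ Set.Ioo 0 1)
    {i : ℕ} (hi : i < M) :
    (1 - γ) * w (i + 1) ≤ p * (1 - γ ^ (i + 1)) + hFun M γ * (1 - γ ^ i) := by
  induction i with
  | zero => simpa [mul_comm] using mul_le_mul_of_nonneg_left hw.one_le (sub_pos.2 hγ.2).le
  | succ i ih =>
    have hstep := mul_le_mul_of_nonneg_left (hw.succ_le γ hγS (i + 1) hi) (sub_pos.2 hγ.2).le
    have hprev := mul_le_mul_of_nonneg_left (ih (by omega)) hγ.1.le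
    linear_combination hstep + hprev

lemma pow_mul_hFun_sq_le (hw : IsFeasible S M p w) (hM : M ≠ 0) (hγS : γ ∈ S)
    (hγ : γ ∈ Set.Ioo 0 1) : γ ^ (M - 1) * hFun M γ ^ 2 ≤ p := by
  obtain ⟨m, rfl⟩ := Nat.exists_eq_succ_of_ne_zero hM
  have hlast := hw.one_sub_mul_succ_le hγS hγ m.lt_succ_self
  rw [hw.last] at hlast
  have hh := hFun_mul_one_sub_pow hM hγ
  have hpow : 0 < 1 - γ ^ (m + 1) := sub_pos.2 (pow_lt_one₀ hγ.1.le hγ.2 hM)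
  refine le_of_mul_le_mul_right ?_ hpow
  simp only [Nat.succ_eq_add_one, Nat.add_sub_cancel] at hh hlast ⊢
  linear_combination hlast + (γ ^ m * hFun (m + 1) γ + 1) * hh

end IsFeasible

section Interpolation

variable {M : ℕ} {c w : ℕ → ℝ}

lemma sum_tail_mem_Icc (hc : ∀ i ∈ Finset.Ico 1 (M + 1), 0 ≤ c i)
    (hsum : ∑ i ∈ Finset.Ico 1 (M + 1), c i ≤ 1) {i : ℕ} (hi : 1 ≤ i) :
    ∑ j ∈ Finset.Ico i (M + 1), c j ∈ Set.Icc 0 1 := by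
  have hsub : Finset.Ico i (M + 1) ⊆ Finset.Ico 1 (M + 1) := Finset.Ico_subset_Ico_left hi
  exact ⟨Finset.sum_nonneg fun j hj => hc j (hsub hj),
    (Finset.sum_le_sum_of_subset_of_nonneg hsub fun j hj _ => hc j hj).trans hsum⟩

lemma interpolate_succ_last : interpolate M c w (M + 1) = w M := by
  simp [interpolate]

variable {S : Set ℝ} {p : ℝ}

lemma interpolate_zero (hw : IsFeasible S M p w) : interpolate M c w 0 = 0 := by
  simp [interpolate, hw.zero]

lemma interpolate_le (hw : IsFeasible S M p w) (hc : ∀ i ∈ Finset.Ico 1 (M + 1), 0 ≤ c i)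
    (hsum : ∑ i ∈ Finset.Ico 1 (M + 1), c i ≤ 1) {i : ℕ} (hi : i ≤ M) :
    interpolate M c w i ≤ w i := by
  rcases i with _ | i
  · rw [interpolate_zero hw, hw.zero]
  · have hμ := sum_tail_mem_Icc hc hsum i.succ_pos
    have := mul_le_mul_of_nonneg_left (hw.le_succ i hi) (sub_nonneg.2 hμ.2)
    rw [interpolate, Nat.add_sub_cancel]
    linear_combination this

lemma le_interpolate_succ (hw : IsFeasible S M p w) (hc : ∀ i ∈ Finset.Ico 1 (M + 1), 0 ≤ c i)
    (hsum : ∑ i ∈ Finset.Ico 1 (M + 1), c i ≤ 1) {i : ℕ} (hi : i ≤ M) :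
    w i ≤ interpolate M c w (i + 1) := by
  rcases hi.eq_or_lt with rfl | hi
  · rw [interpolate_succ_last]
  · have hμ := sum_tail_mem_Icc hc hsum i.succ_pos
    have := mul_le_mul_of_nonneg_left (hw.le_succ i hi) hμ.1
    rw [interpolate, Nat.add_sub_cancel]
    linear_combination this

lemma interpolate_one_le {θ : ℝ} (hw : IsFeasible S M p w)
    (hc : ∀ i ∈ Finset.Ico 1 (M + 1), 0 ≤ c i)
    (hsum : ∑ i ∈ Finset.Ico 1 (M + 1), c i ≤ 1 - θ) (hp : 0 ≤ p) :
    interpolate M c w 1 ≤ (1 - θ) * p := by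
  rw [interpolate, Nat.sub_self, hw.zero, mul_zero, add_zero]
  exact (mul_le_mul_of_nonneg_left hw.one_le (Finset.sum_nonneg hc)).trans
    (mul_le_mul_of_nonneg_right hsum hp)

/-- The interpolation retains the constraints of `w` up to the term `c i * (1 - γ) * w i`, and the
bound `IsFeasible.one_sub_mul_succ_le` on that term leaves a gain. -/
lemma interpolate_succ_le {γ : ℝ} (hw : IsFeasible S M p w)
    (hc : ∀ i ∈ Finset.Ico 1 (M + 1), 0 ≤ c i) (hsum : ∑ i ∈ Finset.Ico 1 (M + 1), c i ≤ 1)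
    (hγS : γ ∈ S) (hγ : γ ∈ Set.Ioo 0 1) {i : ℕ} (hi : i < M) :
    interpolate M c w (i + 2) ≤ γ * interpolate M c w (i + 1) + p + hFun M γ
      - c (i + 1) * (γ ^ (i + 1) * p + γ ^ i * hFun M γ) := by
  set μ := ∑ j ∈ Finset.Ico (i + 2) (M + 1), c j with hμ_def
  have hsplit : ∑ j ∈ Finset.Ico (i + 1) (M + 1), c j = c (i + 1) + μ :=
    Finset.sum_eq_sum_Ico_succ_bot (by omega) c
  have hμ : 0 ≤ μ := (sum_tail_mem_Icc hc hsum (by omega)).1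
  have hμ' : c (i + 1) + μ ≤ 1 := hsplit ▸ (sum_tail_mem_Icc hc hsum i.succ_pos).2
  have hupper : μ * w (i + 2) ≤ μ * (γ * w (i + 1) + p + hFun M γ) := by
    rcases (Nat.succ_le_of_lt hi).eq_or_lt with hlast | hlt
    · simp [hμ_def, ← hlast]
    · exact mul_le_mul_of_nonneg_left (hw.succ_le γ hγS (i + 1) hlt) hμ
  have hlower := mul_le_mul_of_nonneg_left (hw.succ_le γ hγS i hi) (sub_nonneg.2 hμ')
  have hconst := mul_le_mul_of_nonneg_left (hw.one_sub_mul_succ_le hγS hγ hi)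
    (hc (i + 1) (by simp [hi]))
  simp only [interpolate, ← hμ_def, hsplit, show i + 2 - 1 = i + 1 from rfl, Nat.add_sub_cancel]
  linear_combination hupper + hlower + hconst

theorem isFeasible_interpolate {θ : ℝ} (hw : IsFeasible S M p w) (hM : M ≠ 0)
    (hS : S ⊆ Set.Ioo 0 1) (hp : 0 ≤ p) (hθ : 0 ≤ θ)
    (hc : ∀ i ∈ Finset.Ico 1 (M + 1), 0 ≤ c i)
    (hcγ : ∀ i ∈ Finset.Ico 1 (M + 1), ∀ γ ∈ S, γ ^ (M + 1 - i) * hFun (M + 1) γ ≤ c i)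
    (hcθ : ∀ i ∈ Finset.Ico 1 (M + 1), ∀ γ ∈ S, θ ≤ c i * γ ^ i)
    (hsum : ∑ i ∈ Finset.Ico 1 (M + 1), c i ≤ 1 - θ) :
    IsFeasible S (M + 1) ((1 - θ) * p) (interpolate M c w) := by
  have hsum' : ∑ i ∈ Finset.Ico 1 (M + 1), c i ≤ 1 := hsum.trans (sub_le_self 1 hθ)
  have hone := interpolate_one_le hw hc hsum hp
  refine ⟨interpolate_zero hw, interpolate_succ_last.trans hw.last, fun i hi => ?_, hone,
    fun γ hγS i hi => ?_⟩
  · have hi' := Nat.le_of_lt_succ hi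
    exact (interpolate_le hw hc hsum' hi').trans (le_interpolate_succ hw hc hsum' hi')
  · have hγ := hS hγS
    rcases i with _ | i
    · rw [interpolate_zero hw]
      linarith [hFun_pos M.succ_ne_zero hγ]
    · have hiM : i < M := Nat.lt_of_succ_lt_succ hi
      have hmem : i + 1 ∈ Finset.Ico 1 (M + 1) := by simp [hiM]
      have hgap : hFun M γ - hFun (M + 1) γ ≤ γ ^ i * hFun M γ * c (i + 1) := by
        calc hFun M γ - hFun (M + 1) γ
            = γ ^ i * hFun M γ * (γ ^ (M + 1 - (i + 1)) * hFun (M + 1) γ) := by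
              rw [hFun_sub_hFun_succ hM hγ, Nat.add_sub_add_right, ← pow_mul_pow_sub γ hiM.le]
              ring
          _ ≤ γ ^ i * hFun M γ * c (i + 1) :=
              mul_le_mul_of_nonneg_left (hcγ (i + 1) hmem γ hγS)
                (mul_nonneg (pow_nonneg hγ.1.le i) (hFun_pos hM hγ).le)
      have hslack := mul_le_mul_of_nonneg_right (hcθ (i + 1) hmem γ hγS) hp
      linear_combination interpolate_succ_le hw hc hsum' hγS hγ hiM + hgap + hslack

end Interpolation

section OptimalExponent

variable {d : ℕ} {β : ℝ} {M : ℕ}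

lemma Sset_subset_Ioo (hβ : 0 < β) : Sset d β ⊆ Set.Ioo 0 1 := by
  have hden : 0 < 2 * β + d := by positivity
  refine Set.Icc_subset_Ioo (div_pos hβ hden) ((div_lt_one hden).2 ?_)
  linarith

lemma gammaMin_mem_Sset (hβ : 0 < β) : gammaMin d β ∈ Sset d β := by
  refine Set.left_mem_Icc.2 (div_le_div_of_nonneg_right ?_ (by positivity))
  exact le_add_of_nonneg_right d.cast_nonneg

lemma gammaMax_mem_Sset (hβ : 0 < β) : gammaMax d β ∈ Sset d β :=
  Set.right_mem_Icc.2 (gammaMin_mem_Sset hβ).2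

lemma psiFun_nonneg {u : ℕ → ℝ} (hu : u ∈ UM M) : 0 ≤ psiFun d β M u :=
  hu.1.trans (le_max_left _ _)

lemma psiStar_le_psiFun {u : ℕ → ℝ} (hu : u ∈ UM M) : psiStar d β M ≤ psiFun d β M u :=
  csInf_le ⟨0, Set.forall_mem_image.2 fun _ => psiFun_nonneg⟩ ⟨u, hu, rfl⟩

lemma le_psiStar {a : ℝ} (h : ∀ u ∈ UM M, a ≤ psiFun d β M u) : a ≤ psiStar d β M :=
  le_csInf (Set.Nonempty.image _ ⟨fun _ => 0, by simp [UM]⟩) (Set.forall_mem_image.2 h)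

lemma psiStar_le_of_isFeasible (hβ : 0 < β) (hM : 2 ≤ M) {p : ℝ} {w : ℕ → ℝ}
    (hw : IsFeasible (Sset d β) M p w) : psiStar d β M ≤ p := by
  have hmem : w ∈ UM M :=
    ⟨hw.zero ▸ hw.le_succ 0 (by omega),
      by simpa [Nat.sub_add_cancel (by omega : 1 ≤ M), hw.last] using
        hw.le_succ (M - 1) (by omega),
      fun i _ hi => hw.le_succ i (by omega)⟩
  refine (psiStar_le_psiFun hmem).trans (max_le hw.one_le ?_)
  have : Nonempty (Sset d β) := ⟨⟨_, gammaMin_mem_Sset hβ⟩⟩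
  have : Nonempty (Set.Icc 1 M) := ⟨⟨1, le_rfl, by omega⟩⟩
  refine ciSup_le fun γ => sub_le_iff_le_add.2 (ciSup_le fun ⟨i, hi₁, hiM⟩ => ?_)
  obtain ⟨i, rfl⟩ := Nat.exists_eq_add_of_le' hi₁
  have heta : etaFun M w γ (i + 1) = w (i + 1) - γ * w i := by
    unfold etaFun
    split_ifs with h₁ hlast
    · simp [Nat.succ_injective h₁, hw.zero]
    · simp [hlast, hw.last, show M - 1 = i by omega]
    · rfl
  linarith [hw.succ_le γ γ.2 i hiM]

lemma etaFun_succ_eq_bordered (u : ℕ → ℝ) (γ : ℝ) {i : ℕ} (hM : 2 ≤ M) (hi : i < M) :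
    etaFun M u γ (i + 1) = bordered M u (i + 1) - γ * bordered M u i := by
  rcases i with _ | i
  · simp [etaFun, bordered, show 1 ≠ M by omega]
  · rcases eq_or_ne (i + 2) M with rfl | hne <;> simp [etaFun, bordered, hi.ne, *]

lemma bordered_le_succ (hM : 2 ≤ M) {u : ℕ → ℝ} (hu : u ∈ UM M) {i : ℕ} (hi : i < M) :
    bordered M u i ≤ bordered M u (i + 1) := by
  obtain ⟨hfirst, hlast, hmono⟩ := hu
  rcases i with _ | i
  · simpa [bordered, show 1 ≠ M by omega] using hfirst
  · rcases eq_or_ne (i + 2) M with rfl | hne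
    · simpa [bordered] using hlast
    · simpa [bordered, hi.ne, hne] using hmono (i + 1) (by omega) (by omega)

lemma PsiFun_le_one (hM : 2 ≤ M) {u : ℕ → ℝ} (hu : u ∈ UM M) {γ : ℝ} (hγ : γ ∈ Set.Ioo 0 1) :
    PsiFun M u γ ≤ 1 := by
  have hmono : MonotoneOn (bordered M u) (Set.Iic M) :=
    monotoneOn_of_le_add_one Set.ordConnected_Iic fun i _ _ hi => bordered_le_succ hM hu hi
  have : Nonempty (Set.Icc 1 M) := ⟨⟨1, le_rfl, by omega⟩⟩
  refine (sub_le_self _ (hFun_pos (by omega) hγ).le).trans (ciSup_le fun ⟨i, hi₁, hiM⟩ => ?_)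
  obtain ⟨i, rfl⟩ := Nat.exists_eq_add_of_le' hi₁
  have hnonneg : 0 ≤ bordered M u i := by
    simpa [bordered] using hmono (Nat.zero_le M) (Nat.le_of_succ_le hiM) i.zero_le
  have hle : bordered M u (i + 1) ≤ 1 := by
    simpa [bordered, show M ≠ 0 by omega] using hmono hiM Set.self_mem_Iic hiM
  rw [etaFun_succ_eq_bordered u γ hM hiM]
  linarith [mul_nonneg hγ.1.le hnonneg]

lemma isFeasible_bordered (hβ : 0 < β) (hM : 2 ≤ M) {u : ℕ → ℝ} (hu : u ∈ UM M) :
    IsFeasible (Sset d β) M (psiFun d β M u) (bordered M u) where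
  zero := by simp [bordered]
  last := by simp [bordered, show M ≠ 0 by omega]
  le_succ _ := bordered_le_succ hM hu
  one_le := by simp [bordered, psiFun, show 1 ≠ M by omega]
  succ_le γ hγ i hi := by
    have hbdd : BddAbove (Set.range fun γ : Sset d β => PsiFun M u γ) :=
      ⟨1, Set.forall_mem_range.2 fun γ => PsiFun_le_one hM hu (Sset_subset_Ioo hβ γ.2)⟩
    have hPsi : PsiFun M u γ ≤ psiFun d β M u :=
      (le_ciSup hbdd ⟨γ, hγ⟩).trans (le_max_right _ _)
    have heta : etaFun M u γ (i + 1) ≤ ⨆ j : Set.Icc 1 M, etaFun M u γ j :=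
      le_ciSup (f := fun j : Set.Icc 1 M => etaFun M u γ j) (Set.finite_range _).bddAbove
        ⟨i + 1, i.succ_pos, hi⟩
    rw [etaFun_succ_eq_bordered u γ hM hi] at heta
    unfold PsiFun at hPsi
    linarith

lemma psiStar_pos (hβ : 0 < β) (hM : 2 ≤ M) : 0 < psiStar d β M := by
  have hγS := gammaMin_mem_Sset (d := d) hβ
  have hγ := Sset_subset_Ioo hβ hγS
  have hM₀ : M ≠ 0 := by omega
  exact (mul_pos (pow_pos hγ.1 (M - 1)) (pow_pos (hFun_pos hM₀ hγ) 2)).trans_le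
    (le_psiStar fun u hu => (isFeasible_bordered hβ hM hu).pow_mul_hFun_sq_le hM₀ hγS hγ)

lemma exists_pos_forall_le_mul_pow (hβ : 0 < β) {c : ℕ → ℝ}
    (hcγ : ∀ i ∈ Finset.Ico 1 (M + 1), ∀ γ ∈ Sset d β,
      γ ^ (M + 1 - i) * hFun (M + 1) γ ≤ c i) :
    ∃ θ > 0, ∀ i ∈ Finset.Ico 1 (M + 1), ∀ γ ∈ Sset d β, θ ≤ c i * γ ^ i := by
  have hmin := Sset_subset_Ioo hβ (gammaMin_mem_Sset (d := d) hβ)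
  have hmax := Sset_subset_Ioo hβ (gammaMax_mem_Sset (d := d) hβ)
  refine ⟨gammaMin d β ^ (M + 1) * (1 - gammaMax d β),
    mul_pos (pow_pos hmin.1 _) (sub_pos.2 hmax.2), fun i hi γ hγS => ?_⟩
  have hγ := Sset_subset_Ioo hβ hγS
  calc gammaMin d β ^ (M + 1) * (1 - gammaMax d β)
      ≤ γ ^ (M + 1) * (1 - γ) :=
        mul_le_mul (pow_le_pow_left₀ hmin.1.le hγS.1 _) (sub_le_sub_left hγS.2 1)
          (sub_nonneg.2 hmax.2.le) (pow_nonneg hγ.1.le _)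
    _ ≤ γ ^ (M + 1) * hFun (M + 1) γ :=
        mul_le_mul_of_nonneg_left (one_sub_le_hFun M.succ_ne_zero hγ) (pow_nonneg hγ.1.le _)
    _ = γ ^ (M + 1 - i) * hFun (M + 1) γ * γ ^ i := by
        rw [← pow_sub_mul_pow γ (Finset.mem_Ico.1 hi).2.le]
        ring
    _ ≤ c i * γ ^ i := mul_le_mul_of_nonneg_right (hcγ i hi γ hγS) (pow_nonneg hγ.1.le i)

theorem psiStar_succ_lt (hβ : 0 < β) (hM : 2 ≤ M) {c : ℕ → ℝ}
    (hcγ : ∀ i ∈ Finset.Ico 1 (M + 1), ∀ γ ∈ Sset d β,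
      γ ^ (M + 1 - i) * hFun (M + 1) γ ≤ c i)
    (hsum : ∑ i ∈ Finset.Ico 1 (M + 1), c i < 1) :
    psiStar d β (M + 1) < psiStar d β M := by
  have hM₀ : M ≠ 0 := by omega
  have hS : Sset d β ⊆ Set.Ioo 0 1 := Sset_subset_Ioo hβ
  have hγS := gammaMin_mem_Sset (d := d) hβ
  have hc : ∀ i ∈ Finset.Ico 1 (M + 1), 0 ≤ c i := fun i hi =>
    (mul_pos (pow_pos (hS hγS).1 _) (hFun_pos M.succ_ne_zero (hS hγS))).le.trans (hcγ i hi _ hγS)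
  obtain ⟨ε, hε, hcε⟩ := exists_pos_forall_le_mul_pow hβ hcγ
  set θ := min ε (1 - ∑ i ∈ Finset.Ico 1 (M + 1), c i)
  have hθ : 0 < θ := lt_min hε (sub_pos.2 hsum)
  have hgain : psiStar d β (M + 1) + θ * psiStar d β M ≤ psiStar d β M := by
    refine le_psiStar fun u hu => ?_
    have hnext := psiStar_le_of_isFeasible hβ (by omega) <|
      isFeasible_interpolate (isFeasible_bordered hβ hM hu) hM₀ hS
        (psiFun_nonneg hu) hθ.le hc hcγ
        (fun i hi γ hγ => (min_le_left _ _).trans (hcε i hi γ hγ))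
        (le_sub_comm.1 (min_le_right _ _))
    linarith [mul_le_mul_of_nonneg_left (psiStar_le_psiFun (d := d) (β := β) hu) hθ.le]
  linarith [mul_pos hθ (psiStar_pos (d := d) hβ hM)]

end OptimalExponent

theorem stmt5 (d : ℕ) (hd : 1 ≤ d) (β : ℝ) (hβ : 0 < β)
    (M : ℕ) (hM2 : 2 ≤ M) (hM4 : M ≤ 4) :
    psiStar d β (M + 1) < psiStar d β M := by
  refine psiStar_succ_lt hβ hM2 (c := fun i => 1 / ((min (2 * (M + 1 - i)) M : ℕ) + 1))
    (fun i _ γ hγ => pow_mul_hFun_succ_le (M + 1 - i) (Sset_subset_Ioo hβ hγ)) ?_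
  interval_cases M <;> norm_num [Finset.sum_Ico_succ_top]
end

section
/- Let M ≥ 3 be an integer, let (u_0, u_1, …, u_M) solve the optimality system, and set Δ_i = u_{i+1} − u_i. Then γ_M ≤ Δ_{M−1}/Δ_{M−2} ≤ γ_{M−1}. -/
/-- φ_M(x) = min_{γ∈𝒮} (γ·x + h_M(γ)). -/
noncomputable def phiFun (d : ℕ) (β : ℝ) (M : ℕ) (x : ℝ) : ℝ :=
  sInf ((fun γ => γ * x + hFun M γ) '' Sset d β)

/-- (u_0, …, u_M) solves the optimality system: u_0 = 0, u_M = 1,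
0 < u_1 < ⋯ < u_{M−1} < 1, and u_i = u_1 + φ_M(u_{i−1}) for 2 ≤ i ≤ M. -/
def SolvesOptSystem (d : ℕ) (β : ℝ) (M : ℕ) (u : ℕ → ℝ) : Prop :=
  u 0 = 0 ∧ u M = 1 ∧ 0 < u 1 ∧ u (M - 1) < 1 ∧
  (∀ i, 1 ≤ i → i + 1 ≤ M - 1 → u i < u (i + 1)) ∧
  ∀ i, 2 ≤ i → i ≤ M → u i = u 1 + phiFun d β M (u (i - 1))

/-- S_n(a) = Σ_{k=0}^{n−1} a^{−k}. -/
noncomputable def Sgeo (n : ℕ) (a : ℝ) : ℝ := ∑ k ∈ Finset.range n, a⁻¹ ^ k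

/-! `φ_M` is an infimum of lines, and a line attaining the infimum at `x` lies above `φ_M` and
touches it at `x`, so its slope is a supergradient of `φ_M` at `x`. As
`Δ_{i+1} = φ_M(u_{i+1}) - φ_M(u_i)`, the ratio `Δ_{i+1} / Δ_i` is the slope of a secant of `φ_M`,
which lies between the supergradients at its two endpoints. -/

/-- The lower envelope at `x` of the lines of slope `γ ∈ S` and intercept `h γ`; the paper's `φ_M`
is the case `S = 𝒮`, `h = h_M`. Its value is the junk `0` if `S` is empty or if the lines are not
bounded below at `x`. -/
noncomputable def lowerEnvelope (S : Set ℝ) (h : ℝ → ℝ) (x : ℝ) : ℝ :=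
  sInf ((fun γ => γ * x + h γ) '' S)

section LowerEnvelope

variable {S : Set ℝ} {h : ℝ → ℝ} {a b c x y z : ℝ}

theorem lowerEnvelope_eq_of_isMinOn (ha : a ∈ S) (hmin : IsMinOn (fun γ => γ * x + h γ) S a) :
    lowerEnvelope S h x = a * x + h a :=
  (hmin.isGLB ha).csInf_eq ⟨_, a, ha, rfl⟩

theorem lowerEnvelope_sub_le_mul_sub (ha : a ∈ S) (hmin : IsMinOn (fun γ => γ * x + h γ) S a)
    (hbdd : BddBelow ((fun γ => γ * y + h γ) '' S)) :
    lowerEnvelope S h y - lowerEnvelope S h x ≤ a * (y - x) := by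
  have hx : lowerEnvelope S h x = a * x + h a := lowerEnvelope_eq_of_isMinOn ha hmin
  have hy : lowerEnvelope S h y ≤ a * y + h a := csInf_le hbdd ⟨a, ha, rfl⟩
  linarith

theorem stmt10_general (hxy : x < y)
    (hy : y = c + lowerEnvelope S h x) (hz : z = c + lowerEnvelope S h y)
    (ha : a ∈ S) (hamin : IsMinOn (fun γ => γ * x + h γ) S a)
    (hb : b ∈ S) (hbmin : IsMinOn (fun γ => γ * y + h γ) S b) :
    b ≤ (z - y) / (y - x) ∧ (z - y) / (y - x) ≤ a := by
  have hzy : z - y = lowerEnvelope S h y - lowerEnvelope S h x := by linarith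
  have upper : lowerEnvelope S h y - lowerEnvelope S h x ≤ a * (y - x) :=
    lowerEnvelope_sub_le_mul_sub ha hamin hbmin.bddBelow
  have lower : lowerEnvelope S h x - lowerEnvelope S h y ≤ b * (x - y) :=
    lowerEnvelope_sub_le_mul_sub hb hbmin hamin.bddBelow
  rw [hzy, le_div_iff₀ (sub_pos.2 hxy), div_le_iff₀ (sub_pos.2 hxy)]
  exact ⟨by linarith, upper⟩

end LowerEnvelope

theorem stmt10 (d : ℕ) (hd : 1 ≤ d) (β : ℝ) (hβ : 0 < β) (M : ℕ) (hM3 : 3 ≤ M)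
    (u : ℕ → ℝ) (hsol : SolvesOptSystem d β M u)
    (gM gM1 : ℝ) (hgM : gM ∈ Sset d β)
    (hgMmin : ∀ γ ∈ Sset d β,
      gM * u (M - 1) + hFun M gM ≤ γ * u (M - 1) + hFun M γ)
    (hgM1 : gM1 ∈ Sset d β)
    (hgM1min : ∀ γ ∈ Sset d β,
      gM1 * u (M - 2) + hFun M gM1 ≤ γ * u (M - 2) + hFun M γ) :
    gM ≤ (u M - u (M - 1)) / (u (M - 1) - u (M - 2)) ∧
    (u M - u (M - 1)) / (u (M - 1) - u (M - 2)) ≤ gM1 := by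
  obtain ⟨-, -, -, -, hmono, hrec⟩ := hsol
  obtain ⟨m, rfl⟩ := Nat.exists_eq_add_of_le' hM3
  exact stmt10_general (hmono (m + 1) (by omega) le_rfl) (hrec (m + 2) (by omega) (by omega))
    (hrec (m + 3) (by omega) le_rfl) hgM1 hgM1min hgM hgMmin
end

section
/- Fix an integer N ≥ 0 and a real δ ∈ (0,1/2). Then Σ_{x=0}^{N} binom(N,x)·2^{−N}·m(x) = 1 and Σ_{x=0}^{N} binom(N,x)·2^{−N}·m(x)² = ((1+4δ²)^N + (1−4δ²)^N)/2. In other words, if R ∼ Binomial(N, 1/2), then E[m(R)] = 1 and E[m(R)²] = ((1+4δ²)^N + (1−4δ²)^N)/2. -/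
/-- Sign-averaged likelihood ratio against a fair coin, of a coin with heads probability
1/2 ± δ, after N tosses with x heads. -/
noncomputable def mcoin (N : ℕ) (δ : ℝ) (x : ℕ) : ℝ :=
  ((1 + 2 * δ) ^ x * (1 - 2 * δ) ^ (N - x) + (1 - 2 * δ) ^ x * (1 + 2 * δ) ^ (N - x)) / 2

/-!
The likelihood ratios `L t` of a coin with heads probability `(1 + t) / 2` satisfy
`E[L s * L t] = (1 + s * t) ^ N` under the fair coin, by the binomial theorem. Since `L 0 = 1`
and `mcoin` is the average of `L (2δ)` and `L (-2δ)`, both moments follow by expanding bilinearly.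
-/

section LikelihoodRatio

variable {A : Type*} [CommRing A]

/-- The likelihood ratio, against a fair coin, of a coin with heads probability `(1 + t) / 2`,
after `N` tosses with `x` heads. The bias `t` is the difference of the heads and tails
probabilities, so `mcoin N δ` corresponds to `t = ±2δ`. -/
def coinLikelihoodRatio (N : ℕ) (t : A) (x : ℕ) : A :=
  (1 + t) ^ x * (1 - t) ^ (N - x)

theorem coinLikelihoodRatio_zero (N : ℕ) : coinLikelihoodRatio N (0 : A) = 1 := by
  funext x
  simp [coinLikelihoodRatio]

theorem coinLikelihoodRatio_mul (N : ℕ) (s t : A) :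
    coinLikelihoodRatio N s * coinLikelihoodRatio N t =
      fun x ↦ ((1 + s) * (1 + t)) ^ x * ((1 - s) * (1 - t)) ^ (N - x) := by
  funext x
  simp only [Pi.mul_apply, coinLikelihoodRatio, mul_pow]
  ring

end LikelihoodRatio

section BinomialMean

variable {K : Type*} [Field K]

/-- The expectation `E[f(R)]` for `R ∼ Binomial(N, 1/2)`, as a linear functional of `f`. In
characteristic 2 the weights are junk, because of the division by `2 ^ N`. -/
def fairBinomialMean (N : ℕ) : (ℕ → K) →ₗ[K] K :=
  ∑ x ∈ Finset.range (N + 1), ((N.choose x : K) / 2 ^ N) • LinearMap.proj x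

theorem fairBinomialMean_apply (N : ℕ) (f : ℕ → K) :
    fairBinomialMean N f = ∑ x ∈ Finset.range (N + 1), (N.choose x : K) / 2 ^ N * f x := by
  simp only [fairBinomialMean, LinearMap.sum_apply, LinearMap.smul_apply, LinearMap.proj_apply,
    smul_eq_mul]

theorem fairBinomialMean_pow_mul_pow (N : ℕ) (a b : K) :
    fairBinomialMean N (fun x ↦ a ^ x * b ^ (N - x)) = ((a + b) / 2) ^ N := by
  rw [fairBinomialMean_apply, div_pow, add_pow, Finset.sum_div]
  exact Finset.sum_congr rfl fun x _ ↦ by ring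

variable [NeZero (2 : K)]

theorem fairBinomialMean_coinLikelihoodRatio_mul (N : ℕ) (s t : K) :
    fairBinomialMean N (coinLikelihoodRatio N s * coinLikelihoodRatio N t) = (1 + s * t) ^ N := by
  have average_eq : ((1 + s) * (1 + t) + (1 - s) * (1 - t)) / 2 = 1 + s * t := by
    field_simp
    ring
  rw [coinLikelihoodRatio_mul, fairBinomialMean_pow_mul_pow, average_eq]

theorem fairBinomialMean_coinLikelihoodRatio (N : ℕ) (t : K) :
    fairBinomialMean N (coinLikelihoodRatio N t) = 1 := by
  simpa only [coinLikelihoodRatio_zero, mul_one, mul_zero, add_zero, one_pow] using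
    fairBinomialMean_coinLikelihoodRatio_mul N t 0

end BinomialMean

theorem mcoin_eq_smul_add (N : ℕ) (δ : ℝ) :
    mcoin N δ =
      (1 / 2 : ℝ) • (coinLikelihoodRatio N (2 * δ) + coinLikelihoodRatio N (-(2 * δ))) := by
  funext x
  simp only [mcoin, coinLikelihoodRatio, Pi.smul_apply, Pi.add_apply, smul_eq_mul,
    sub_neg_eq_add, ← sub_eq_add_neg]
  ring

theorem fairBinomialMean_mcoin (N : ℕ) (δ : ℝ) : fairBinomialMean N (mcoin N δ) = 1 := by
  rw [mcoin_eq_smul_add, map_smul, map_add, fairBinomialMean_coinLikelihoodRatio,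
    fairBinomialMean_coinLikelihoodRatio]
  norm_num

theorem mcoin_sq (N : ℕ) (δ : ℝ) :
    mcoin N δ ^ 2 = (1 / 4 : ℝ) •
      (coinLikelihoodRatio N (2 * δ) * coinLikelihoodRatio N (2 * δ) +
        (2 : ℝ) • (coinLikelihoodRatio N (2 * δ) * coinLikelihoodRatio N (-(2 * δ))) +
        coinLikelihoodRatio N (-(2 * δ)) * coinLikelihoodRatio N (-(2 * δ))) := by
  rw [mcoin_eq_smul_add]
  funext x
  simp only [Pi.pow_apply, Pi.smul_apply, Pi.add_apply, Pi.mul_apply, smul_eq_mul]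
  ring

theorem fairBinomialMean_mcoin_sq (N : ℕ) (δ : ℝ) :
    fairBinomialMean N (mcoin N δ ^ 2) = ((1 + 4 * δ ^ 2) ^ N + (1 - 4 * δ ^ 2) ^ N) / 2 := by
  have same_sign : 1 + 2 * δ * (2 * δ) = 1 + 4 * δ ^ 2 := by ring
  have opposite_sign : 1 + 2 * δ * -(2 * δ) = 1 - 4 * δ ^ 2 := by ring
  simp only [mcoin_sq, map_smul, map_add, fairBinomialMean_coinLikelihoodRatio_mul, neg_mul_neg,
    same_sign, opposite_sign, smul_eq_mul]
  ring

theorem stmt14_general (N : ℕ) (δ : ℝ) :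
    (∑ x ∈ Finset.range (N + 1), (N.choose x : ℝ) / 2 ^ N * mcoin N δ x = 1) ∧
    (∑ x ∈ Finset.range (N + 1), (N.choose x : ℝ) / 2 ^ N * (mcoin N δ x) ^ 2
      = ((1 + 4 * δ ^ 2) ^ N + (1 - 4 * δ ^ 2) ^ N) / 2) := by
  simpa only [fairBinomialMean_apply, Pi.pow_apply] using
    And.intro (fairBinomialMean_mcoin N δ) (fairBinomialMean_mcoin_sq N δ)

theorem stmt14 (N : ℕ) (δ : ℝ) (hδ0 : 0 < δ) (hδ : δ < 1 / 2) :
    (∑ x ∈ Finset.range (N + 1), (N.choose x : ℝ) / 2 ^ N * mcoin N δ x = 1) ∧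
    (∑ x ∈ Finset.range (N + 1), (N.choose x : ℝ) / 2 ^ N * (mcoin N δ x) ^ 2
      = ((1 + 4 * δ ^ 2) ^ N + (1 - 4 * δ ^ 2) ^ N) / 2) :=
  stmt14_general N δ
end
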